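/- Let 𝓘 = {I_r}_{r∈Q} be a partition of the time horizon based on due dates and let σ = {σ_r}_{r∈Q} be a set of permutations consistent with the WSPT/LPT ordering rules. Then there always exists an optimal schedule without idle time, with all completion times at most T, that satisfies the ordering σ_r inside each interval on each machine except possibly for one job per machine and interval: for every r ∈ Q and machine k, every pair of jobs i ≠ j with μ(i) = μ(j) = k, C_i ∈ I_r, C_j ∈ I_r and σ_r(i) < σ_r(j) satisfies S_i < S_j, unless one of i, j is the job that completes first in I_r on machine k; moreover such an exception can occur only if that first-completing job is late in I_r (its due date is at most e_{r−1}). -/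

import Mathlib

open Finset

/-!
Among all schedules, choose one that minimizes lexicographically the total weighted tardiness,
then `∑ p j * S j`, then `∑ p j * N j * C j`, where `N j` counts the jobs that the ordering places
after `j` in the interval containing the completion time `C j`. The second component decreases
under every left shift, so the chosen schedule has no gaps and all machines are busy until the last
job starts, which bounds the completion times. It is unchanged when two consecutive jobs are
interchanged, so such an interchange is governed by the first and third components only.

If two jobs completing in the same interval are out of order, then so are two consecutive jobs
`a`, `b` between them. Since `b` is short, so is `a`, as long jobs come first. By the WSPT and LPT
rules, interchanging them does not increase the tardiness, and if it preserves the tardiness then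
both jobs still complete in the interval and the third component decreases by
`p a * p b * (N b - N a)`. The argument only fails if `a` is late and starts before the interval,
because then `b` may be moved out of the interval; such a job `a` completes first.
-/

variable {J M Q α : Type*}

/-- Feasibility of the schedule `(μ, S)`: job `j` occupies machine `μ j` during `[S j, S j + p j)`,
and jobs on the same machine do not overlap. -/
def IsSchedule (p : J → ℕ) (μ : J → M) (S : J → ℕ) : Prop :=
  ∀ i j, i ≠ j → μ i = μ j → S i + p i ≤ S j ∨ S j + p j ≤ S i

/-- Machine `k` processes a job during the unit slot `[u, u + 1)`. -/
def IsBusy (p : J → ℕ) (μ : J → M) (S : J → ℕ) (k : M) (u : ℕ) : Prop :=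
  ∃ j, μ j = k ∧ S j ≤ u ∧ u < S j + p j

/-- An active schedule: no other feasible schedule, on possibly different machines, starts some job
earlier and none later. -/
structure IsActive (p : J → ℕ) (μ : J → M) (S : J → ℕ) : Prop where
  isSchedule : IsSchedule p μ S
  eq_of_le : ∀ (μ' : J → M) (S' : J → ℕ), IsSchedule p μ' S' → S' ≤ S → S' = S

section Schedule

variable {p S : J → ℕ} {μ : J → M}

theorem exists_isSchedule [Finite J] [Nonempty M] (p : J → ℕ) :
    ∃ (μ : J → M) (S : J → ℕ), IsSchedule p μ S := by
  cases nonempty_fintype J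
  let index := Fintype.equivFin J
  have sequential : ∀ i j, index i < index j →
      index i * ∑ x, p x + p i ≤ index j * ∑ x, p x := fun i j hij =>
    calc index i * ∑ x, p x + p i ≤ index i * ∑ x, p x + ∑ x, p x := by
          gcongr; exact single_le_sum (fun _ _ => Nat.zero_le _) (mem_univ i)
      _ = (index i + 1) * ∑ x, p x := (Nat.succ_mul _ _).symm
      _ ≤ index j * ∑ x, p x := Nat.mul_le_mul_right _ hij
  refine ⟨fun _ => Classical.arbitrary M, fun j => index j * ∑ x, p x, fun i j hij _ => ?_⟩
  exact (lt_or_gt_of_ne (index.injective.ne hij)).imp (sequential i j) (sequential j i)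

theorem IsSchedule.finish_le_of_start_le (hS : IsSchedule p μ S) {i j : J} {t : ℕ}
    (hμ : μ i = μ j) (hj : S j ≤ t) (hi : t < S i + p i) : S j + p j ≤ S i + p i := by
  rcases eq_or_ne i j with rfl | hij
  · rfl
  · have := hS i j hij hμ
    omega

theorem IsSchedule.sum_le_of_finish_le [Fintype J] [DecidableEq M] (hS : IsSchedule p μ S)
    {k : M} {t : ℕ} (hfinish : ∀ j, μ j = k → S j + p j ≤ t) :
    ∑ j with μ j = k, p j ≤ t := by
  have hdisjoint : Set.PairwiseDisjoint (univ.filter (μ · = k) : Set J)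
      (fun j => Ico (S j) (S j + p j)) := by
    intro i hi j hj hij
    rw [mem_coe, mem_filter_univ] at hi hj
    refine disjoint_left.mpr fun u hui huj => ?_
    rw [mem_Ico] at hui huj
    have := hS i j hij (hi.trans hj.symm)
    omega
  calc ∑ j with μ j = k, p j
      = #((univ.filter (μ · = k)).biUnion fun j => Ico (S j) (S j + p j)) := by
        simp [card_biUnion hdisjoint]
    _ ≤ #(range t) := card_le_card fun u hu => by
        simp only [mem_biUnion, mem_filter_univ, mem_Ico, mem_range] at hu ⊢
        obtain ⟨j, hj, -, hu⟩ := hu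
        exact hu.trans_le (hfinish j hj)
    _ = t := card_range t

/-- The idea is to shift every job of machine `k` that starts after `u` one unit to the left. -/
theorem IsActive.finish_le_of_not_isBusy (h : IsActive p μ S) {k : M} {u : ℕ}
    (hidle : ¬ IsBusy p μ S k u) {j : J} (hj : μ j = k) : S j + p j ≤ u := by
  classical
  have hbefore : ∀ i, μ i = k → S i ≤ u → S i + p i ≤ u := fun i hi hiu =>
    not_lt.mp fun hlt => hidle ⟨i, hi, hiu, hlt⟩
  let S' : J → ℕ := fun i => if μ i = k ∧ u < S i then S i - 1 else S i
  have hS' : IsSchedule p μ S' := by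
    intro x y hxy hμ
    have hdisj := h.isSchedule x y hxy hμ
    have hx := hbefore x
    have hy := hbefore y
    simp only [S', hμ] at hx ⊢
    split_ifs <;> grind
  have hS'S : S' ≤ S := fun i => by
    simp only [S']
    split_ifs <;> omega
  refine hbefore j hj (not_lt.mp fun huj => ?_)
  have hshift : S' j = S j := congrFun (h.eq_of_le μ S' hS' hS'S) j
  simp only [S', hj, huj, and_self, if_true] at hshift
  omega

/-- Otherwise `j` could be moved to machine `k` and start at time `u`. -/
theorem IsActive.isBusy_of_lt_start (h : IsActive p μ S) {j : J} {u : ℕ} (hu : u < S j) (k : M) :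
    IsBusy p μ S k u := by
  classical
  by_contra hidle
  have hfinish : ∀ i, μ i = k → S i + p i ≤ u := fun i => h.finish_le_of_not_isBusy hidle
  have hmove : IsSchedule p (Function.update μ j k) (Function.update S j u) := by
    intro x y hxy hμ
    rcases eq_or_ne x j with rfl | hx
    · rw [Function.update_self, Function.update_of_ne hxy.symm] at hμ
      simpa [hxy.symm] using Or.inr (hfinish y hμ.symm)
    · rcases eq_or_ne y j with rfl | hy
      · rw [Function.update_self, Function.update_of_ne hx] at hμ
        simpa [hx] using Or.inl (hfinish x hμ)
      · simpa [hx, hy] using h.isSchedule x y hxy (by simpa [hx, hy] using hμ)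
  have heq := congrFun (h.eq_of_le _ _ hmove (update_le_self_iff.mpr hu.le)) j
  rw [Function.update_self] at heq
  exact hu.ne heq

theorem IsActive.isBusy_of_lt_sum [Fintype J] [DecidableEq M] (h : IsActive p μ S) {k : M} {u : ℕ}
    (hu : u < ∑ j with μ j = k, p j) : IsBusy p μ S k u := by
  by_contra hidle
  exact hu.not_ge (h.isSchedule.sum_le_of_finish_le fun _ => h.finish_le_of_not_isBusy hidle)

theorem IsActive.card_mul_start_le [Fintype J] [Fintype M] [DecidableEq J] (h : IsActive p μ S)
    (j : J) : Fintype.card M * S j ≤ ∑ i ∈ univ.erase j, p i := by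
  classical
  have hcover : (univ : Finset M) ×ˢ range (S j) ⊆
      (univ.erase j).biUnion fun i => {μ i} ×ˢ Ico (S i) (S i + p i) := by
    rintro ⟨k, u⟩ hu
    have huj : u < S j := by simpa using hu
    obtain ⟨i, hi, hiu, hui⟩ := h.isBusy_of_lt_start huj k
    have hij : i ≠ j := by
      rintro rfl
      exact huj.not_ge hiu
    simp only [mem_biUnion, mem_erase, mem_univ, and_true, mem_product, mem_singleton, mem_Ico]
    exact ⟨i, hij, hi.symm, hiu, hui⟩
  simpa using (card_le_card hcover).trans card_biUnion_le

theorem IsActive.finish_le [Fintype J] [Fintype M] [Nonempty M] (h : IsActive p μ S) (j : J) :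
    S j + p j ≤ (∑ i, p i - univ.sup p) / Fintype.card M + univ.sup p := by
  classical
  have hstart := h.card_mul_start_le j
  have hsum := sum_erase_add univ p (mem_univ j)
  have hsup : p j ≤ univ.sup p := le_sup (mem_univ j)
  have hslack : univ.sup p - p j ≤ Fintype.card M * (univ.sup p - p j) :=
    Nat.le_mul_of_pos_left _ Fintype.card_pos
  have hshifted : S j - (univ.sup p - p j) ≤ (∑ i, p i - univ.sup p) / Fintype.card M := by
    rw [Nat.le_div_iff_mul_le Fintype.card_pos, mul_comm, Nat.mul_sub]
    omega
  omega

theorem IsActive.exists_consecutive_inversion [LinearOrder α] (h : IsActive p μ S)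
    (hp : ∀ j, 0 < p j) (σ : J → α) {a b : J} (hμ : μ a = μ b) (hab : S a < S b)
    (hσ : σ b < σ a) :
    ∃ a' b', μ a' = μ b' ∧ S b' = S a' + p a' ∧ σ b' < σ a' ∧
      (a' = a ∨ S a + p a ≤ S a') ∧ (b' = b ∨ S b' + p b' ≤ S b) := by
  induction hN : S b - S a using Nat.strong_induction_on generalizing a b with
  | _ N ih =>
    have hdisj := h.isSchedule a b (by rintro rfl; exact hab.false) hμ
    have hpa := hp a
    have hpb := hp b
    by_cases hconsec : S b = S a + p a
    · exact ⟨a, b, hμ, hconsec, hσ, .inl rfl, .inl rfl⟩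
    obtain ⟨x, hxμ, hx, hx'⟩ : IsBusy p μ S (μ a) (S a + p a) :=
      h.isBusy_of_lt_start (j := b) (by omega) _
    have hxa := h.isSchedule x a (by rintro rfl; omega) hxμ
    have hxb := h.isSchedule x b (by rintro rfl; omega) (hxμ.trans hμ)
    rcases lt_or_ge (σ x) (σ a) with hσx | hσx
    · obtain ⟨a', b', hμ', hconsec', hσ', ha', hb'⟩ :=
        ih (S x - S a) (by omega) hxμ.symm (by omega) hσx rfl
      refine ⟨a', b', hμ', hconsec', hσ', ha', .inr ?_⟩
      rcases hb' with rfl | hb' <;> omega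
    · obtain ⟨a', b', hμ', hconsec', hσ', ha', hb'⟩ :=
        ih (S b - S x) (by omega) (hxμ.trans hμ) (by omega) (hσ.trans_le hσx) rfl
      refine ⟨a', b', hμ', hconsec', hσ', .inr ?_, hb'⟩
      rcases ha' with rfl | ha' <;> omega

end Schedule

section Swap

variable [DecidableEq J] {p S : J → ℕ} {μ : J → M} {a b : J}

/-- The start times after interchanging job `a` with the job `b` that follows it immediately. -/
def swapStart (p S : J → ℕ) (a b : J) : J → ℕ :=
  Function.update (Function.update S a (S a + p b)) b (S a)

theorem IsSchedule.swapStart (hS : IsSchedule p μ S) (hp : ∀ j, 0 < p j) (hμ : μ a = μ b)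
    (hconsec : S b = S a + p a) : IsSchedule p μ (swapStart p S a b) := by
  have houtside : ∀ x, x ≠ a → x ≠ b → μ x = μ a →
      S x + p x ≤ S a ∨ S a + p a + p b ≤ S x := by
    intro x hxa hxb hx
    have := hS x a hxa hx
    have := hS x b hxb (hx.trans hμ)
    have := hp x
    omega
  intro x y hxy hxyμ
  have := hS x y hxy hxyμ
  have := houtside x
  have := houtside y
  simp only [_root_.swapStart, Function.update_apply]
  grind

theorem sum_swapStart [Fintype J] (p S : J → ℕ) (hab : a ≠ b) (F : J → ℕ → ℕ) :
    ∑ j, F j (swapStart p S a b j) + (F a (S a) + F b (S b)) =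
      ∑ j, F j (S j) + (F a (S a + p b) + F b (S a)) := by
  have hrest : ∑ j ∈ {a, b}ᶜ, F j (swapStart p S a b j) = ∑ j ∈ {a, b}ᶜ, F j (S j) :=
    sum_congr rfl fun j hj => by
      simp only [mem_compl, mem_insert, mem_singleton, not_or] at hj
      simp [swapStart, hj.1, hj.2]
  rw [← sum_add_sum_compl {a, b} fun j => F j (S j),
    ← sum_add_sum_compl {a, b} fun j => F j (swapStart p S a b j), hrest, sum_pair hab,
    sum_pair hab]
  simp only [swapStart, Function.update_self, Function.update_of_ne hab]
  ring

end Swap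

section LexCost

variable [Fintype J] {p S : J → ℕ} {μ : J → M} {f g : J → ℕ → ℕ}

/-- The lexicographic objective used to select a schedule: the total cost `f` of the start times,
then `∑ j, p j * S j`, then the total cost `g`. -/
def lexCost (p : J → ℕ) (f g : J → ℕ → ℕ) (S : J → ℕ) : ℕ ×ₗ ℕ ×ₗ ℕ :=
  toLex (∑ j, f j (S j), toLex (∑ j, p j * S j, ∑ j, g j (S j)))

/-- A schedule whose `lexCost` is minimal among all schedules. -/
structure IsLexOptimal (p : J → ℕ) (f g : J → ℕ → ℕ) (μ : J → M) (S : J → ℕ) : Prop where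
  isSchedule : IsSchedule p μ S
  lexCost_le : ∀ (μ' : J → M) (S' : J → ℕ), IsSchedule p μ' S' → lexCost p f g S ≤ lexCost p f g S'

theorem exists_isLexOptimal [Nonempty M] (p : J → ℕ) (f g : J → ℕ → ℕ) :
    ∃ (μ : J → M) (S : J → ℕ), IsLexOptimal p f g μ S := by
  obtain ⟨μ₀, S₀, h₀⟩ := exists_isSchedule (M := M) p
  obtain ⟨S, ⟨μ, hS⟩, hmin⟩ := exists_minimalFor_of_wellFoundedLT
    (fun S => ∃ μ : J → M, IsSchedule p μ S) (lexCost p f g) ⟨S₀, μ₀, h₀⟩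
  exact ⟨μ, S, hS, fun μ' S' hS' => (le_total _ _).elim id (hmin ⟨μ', hS'⟩)⟩

theorem IsLexOptimal.sum_le (h : IsLexOptimal p f g μ S) {μ' : J → M} {S' : J → ℕ}
    (hS' : IsSchedule p μ' S') : ∑ j, f j (S j) ≤ ∑ j, f j (S' j) := by
  have := h.lexCost_le μ' S' hS'
  rw [lexCost, lexCost, Prod.Lex.toLex_le_toLex] at this
  exact this.elim le_of_lt fun h => h.1.le

theorem IsLexOptimal.isActive (h : IsLexOptimal p f g μ S) (hp : ∀ j, 0 < p j)
    (hf : ∀ j, Monotone (f j)) : IsActive p μ S where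
  isSchedule := h.isSchedule
  eq_of_le μ' S' hS' hle := by
    have hcost : ∑ j, f j (S' j) ≤ ∑ j, f j (S j) := sum_le_sum fun j _ => hf j (hle j)
    by_contra hne
    obtain ⟨-, j, hj⟩ := Pi.lt_def.mp (lt_of_le_of_ne hle hne)
    have hstart : ∑ j, p j * S' j < ∑ j, p j * S j :=
      sum_lt_sum (fun i _ => Nat.mul_le_mul_left _ (hle i))
        ⟨j, mem_univ j, Nat.mul_lt_mul_of_pos_left hj (hp j)⟩
    refine (h.lexCost_le μ' S' hS').not_gt ?_
    simp only [lexCost, Prod.Lex.toLex_lt_toLex]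
    exact hcost.lt_or_eq.imp_right fun heq => ⟨heq, .inl hstart⟩

/-- Interchanging consecutive jobs leaves `∑ j, p j * S j` unchanged. -/
theorem IsLexOptimal.toLex_le_swap (h : IsLexOptimal p f g μ S) (hp : ∀ j, 0 < p j) {a b : J}
    (hμ : μ a = μ b) (hconsec : S b = S a + p a) :
    toLex (f a (S a) + f b (S b), g a (S a) + g b (S b)) ≤
      toLex (f a (S a + p b) + f b (S a), g a (S a + p b) + g b (S a)) := by
  classical
  have hab : a ≠ b := by
    rintro rfl
    have := hp a
    omega
  have hf := sum_swapStart p S hab f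
  have hg := sum_swapStart p S hab g
  have hstart : ∑ j, p j * swapStart p S a b j = ∑ j, p j * S j := by
    have hbalance : p a * S a + p b * S b = p a * (S a + p b) + p b * S a := by
      rw [hconsec]; ring
    have := sum_swapStart p S hab fun j s => p j * s
    omega
  have hle := h.lexCost_le μ _ (h.isSchedule.swapStart hp hμ hconsec)
  simp only [lexCost, Prod.Lex.toLex_le_toLex, hstart, lt_irrefl, true_and, false_or] at hle ⊢
  omega

end LexCost

section WeightedTardiness

variable {p w d : J → ℕ}

/-- The weighted tardiness of job `j` when it starts at time `s`. -/
def weightedTardiness (p w d : J → ℕ) (j : J) (s : ℕ) : ℕ :=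
  w j * (s + p j - d j)

theorem weightedTardiness_monotone (p w d : J → ℕ) (j : J) : Monotone (weightedTardiness p w d j) :=
  fun _ _ hst => Nat.mul_le_mul_left _ (Nat.sub_le_sub_right (Nat.add_le_add_right hst _) _)

theorem weightedTardiness_eq_zero {j : J} {s : ℕ} (h : s + p j ≤ d j) :
    weightedTardiness p w d j s = 0 := by
  rw [weightedTardiness, Nat.sub_eq_zero_of_le h, mul_zero]

theorem weightedTardiness_lt {j : J} {s t : ℕ} (hw : 0 < w j) (hst : s < t)
    (ht : d j < t + p j) : weightedTardiness p w d j s < weightedTardiness p w d j t :=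
  Nat.mul_lt_mul_of_pos_left (by omega) hw

theorem weightedTardiness_add {j : J} {s : ℕ} (t : ℕ) (h : d j ≤ s + p j) :
    weightedTardiness p w d j (s + t) = weightedTardiness p w d j s + t * w j := by
  rw [weightedTardiness, weightedTardiness, show s + t + p j - d j = s + p j - d j + t by omega]
  ring

theorem weightedTardiness_swap_le {a b : J} {s : ℕ} (ha : d a ≤ s + p a) (hb : d b ≤ s + p b)
    (hwspt : p b * w a ≤ p a * w b) :
    weightedTardiness p w d a (s + p b) + weightedTardiness p w d b s ≤
      weightedTardiness p w d a s + weightedTardiness p w d b (s + p a) := by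
  rw [weightedTardiness_add _ ha, weightedTardiness_add _ hb]
  omega

end WeightedTardiness

section OrderPenalty

variable [Fintype J] [Fintype Q] [LinearOrder α] {p : J → ℕ} {lo hi : Q → ℕ} {σ : Q → J → α}

/-- The number of jobs that `σ r` places after `j`, where `(lo r, hi r]` is the interval containing
`C`; it is `0` if there is no such interval. -/
def followerCount (lo hi : Q → ℕ) (σ : Q → J → α) (j : J) (C : ℕ) : ℕ :=
  ∑ r, if C ∈ Ioc (lo r) (hi r) then #{i | σ r j < σ r i} else 0

/-- The completion time of job `j`, started at `s`, weighted by `p j` times its `followerCount`;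
the sum over all jobs decreases when consecutive jobs of an interval are put into the order `σ`. -/
def orderPenalty (p : J → ℕ) (lo hi : Q → ℕ) (σ : Q → J → α) (j : J) (s : ℕ) : ℕ :=
  p j * followerCount lo hi σ j (s + p j) * (s + p j)

theorem followerCount_eq
    (hdisj : Pairwise fun r r' => Disjoint (Ioc (lo r) (hi r)) (Ioc (lo r') (hi r')))
    {r : Q} {C : ℕ} (hC : C ∈ Ioc (lo r) (hi r)) (j : J) :
    followerCount lo hi σ j C = #{i | σ r j < σ r i} := by
  rw [followerCount, Fintype.sum_eq_single r fun r' hr' => if_neg fun hC' =>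
    disjoint_left.mp (hdisj hr') hC' hC, if_pos hC]

theorem orderPenalty_swap_lt
    (hdisj : Pairwise fun r r' => Disjoint (Ioc (lo r) (hi r)) (Ioc (lo r') (hi r')))
    {r : Q} {a b : J} {s : ℕ} (hpa : 0 < p a) (hpb : 0 < p b) (ha : lo r < s + p a)
    (hb : lo r < s + p b) (hhi : s + p a + p b ≤ hi r) (hσ : σ r b < σ r a) :
    orderPenalty p lo hi σ a (s + p b) + orderPenalty p lo hi σ b s <
      orderPenalty p lo hi σ a s + orderPenalty p lo hi σ b (s + p a) := by
  have hcount : #{i | σ r a < σ r i} < #{i | σ r b < σ r i} :=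
    card_lt_card ⟨monotone_filter_right _ fun _ _ => hσ.trans, fun hsub => by
      simpa using hsub (mem_filter_univ a |>.mpr hσ)⟩
  simp only [orderPenalty]
  rw [followerCount_eq hdisj (r := r) (by rw [mem_Ioc]; omega),
    followerCount_eq hdisj (r := r) (by rw [mem_Ioc]; omega),
    followerCount_eq hdisj (r := r) (by rw [mem_Ioc]; omega),
    followerCount_eq hdisj (r := r) (by rw [mem_Ioc]; omega)]
  have := Nat.mul_lt_mul_of_pos_left hcount (Nat.mul_pos hpa hpb)
  linarith

end OrderPenalty

/-- `σ` follows the WSPT/LPT ordering rules for the interval `(lo, hi]`, where jobs with smaller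
value come first. The WSPT rule is cross-multiplied and leaves ties free. -/
structure FollowsWSPTLPT [LT α] (p w d : J → ℕ) (lo hi : ℕ) (σ : J → α) : Prop where
  long_lt_short : ∀ i j, hi - lo ≤ p i → p j < hi - lo → σ i < σ j
  late_lt_onTime : ∀ i j, p i < hi - lo → p j < hi - lo → d i ≤ lo → hi ≤ d j → σ i < σ j
  lpt : ∀ i j, p i < hi - lo → p j < hi - lo → hi ≤ d i → hi ≤ d j → p j < p i → σ i < σ j
  wspt : ∀ i j, p i < hi - lo → p j < hi - lo → d i ≤ lo → d j ≤ lo →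
    p i * w j < p j * w i → σ i < σ j

section Ordering

variable [Fintype J] [Fintype Q] [LinearOrder α] {p w d S : J → ℕ} {μ : J → M} {lo hi : Q → ℕ}
  {σ : Q → J → α}

theorem toLex_swap_lt_of_inversion
    (hdisj : Pairwise fun r r' => Disjoint (Ioc (lo r) (hi r)) (Ioc (lo r') (hi r')))
    {r : Q} (hdue : ∀ j, d j ≤ lo r ∨ hi r ≤ d j) (hσ : FollowsWSPTLPT p w d (lo r) (hi r) (σ r))
    {a b : J} {s : ℕ} (hpa : 0 < p a) (hpb : 0 < p b) (hwb : 0 < w b) (hlo : lo r < s + p a)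
    (hhi : s + p a + p b ≤ hi r) (hab : σ r b < σ r a) (ha : lo r < s ∨ hi r ≤ d a) :
    toLex (weightedTardiness p w d a (s + p b) + weightedTardiness p w d b s,
        orderPenalty p lo hi σ a (s + p b) + orderPenalty p lo hi σ b s) <
      toLex (weightedTardiness p w d a s + weightedTardiness p w d b (s + p a),
        orderPenalty p lo hi σ a s + orderPenalty p lo hi σ b (s + p a)) := by
  have hbshort : p b < hi r - lo r := by omega
  have hashort : p a < hi r - lo r := by
    by_contra hlong
    exact hab.not_gt (hσ.long_lt_short a b (not_lt.mp hlong) hbshort)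
  have hpenalty := fun hlo' : lo r < s + p b =>
    orderPenalty_swap_lt hdisj hpa hpb hlo hlo' hhi hab
  rw [Prod.Lex.toLex_lt_toLex']
  rcases hdue a with halate | haontime
  · have hs : lo r < s := ha.resolve_right (by omega)
    rcases hdue b with hblate | hbontime
    · have hwspt : p b * w a ≤ p a * w b := not_lt.mp fun hlt =>
        hab.not_gt (hσ.wspt a b hashort hbshort halate hblate hlt)
      exact ⟨weightedTardiness_swap_le (by omega) (by omega) hwspt,
        fun _ => hpenalty (by omega)⟩
    · exact absurd (hσ.late_lt_onTime a b hashort hbshort halate hbontime) hab.not_gt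
  · have hazero : weightedTardiness p w d a (s + p b) = 0 := weightedTardiness_eq_zero (by omega)
    rcases hdue b with hblate | hbontime
    · have hblt : weightedTardiness p w d b s < weightedTardiness p w d b (s + p a) :=
        weightedTardiness_lt hwb (by omega) (by omega)
      dsimp only
      exact ⟨by omega, fun heq => by omega⟩
    · have hlpt : p a ≤ p b := not_lt.mp fun hlt =>
        hab.not_gt (hσ.lpt a b hashort hbshort haontime hbontime hlt)
      have hbzero : weightedTardiness p w d b s = 0 := weightedTardiness_eq_zero (by omega)
      simp only [hazero, hbzero]
      exact ⟨Nat.zero_le _, fun _ => hpenalty (by omega)⟩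

theorem IsLexOptimal.start_lt_or_straddles
    (h : IsLexOptimal p (weightedTardiness p w d) (orderPenalty p lo hi σ) μ S)
    (hp : ∀ j, 0 < p j) (hw : ∀ j, 0 < w j)
    (hdisj : Pairwise fun r r' => Disjoint (Ioc (lo r) (hi r)) (Ioc (lo r') (hi r')))
    {r : Q} (hdue : ∀ j, d j ≤ lo r ∨ hi r ≤ d j) (hσ : FollowsWSPTLPT p w d (lo r) (hi r) (σ r))
    {i j : J} (hμ : μ i = μ j) (hCi : S i + p i ≤ hi r) (hCj : lo r < S j + p j)
    (hij : σ r i < σ r j) : S i < S j ∨ S j ≤ lo r ∧ d j ≤ lo r := by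
  by_contra! hcon
  obtain ⟨hSji, hstraddle⟩ := hcon
  have hactive := h.isActive hp (weightedTardiness_monotone p w d)
  have hdisjoint := h.isSchedule i j (by rintro rfl; exact hij.false) hμ
  have hpi := hp i
  have hj : lo r < S j ∨ hi r ≤ d j := by
    have := hdue j
    omega
  obtain ⟨a, b, hμab, hconsec, hσab, ha, hb⟩ :=
    hactive.exists_consecutive_inversion hp (σ r) hμ.symm (by have := hp j; omega) hij
  have hhi : S a + p a + p b ≤ hi r := by
    rcases hb with rfl | hb <;> omega
  have hlo : lo r < S a + p a ∧ (lo r < S a ∨ hi r ≤ d a) := by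
    rcases ha with rfl | ha
    · exact ⟨hCj, hj⟩
    · omega
  have hle := h.toLex_le_swap hp hμab hconsec
  rw [hconsec] at hle
  exact hle.not_gt (toLex_swap_lt_of_inversion hdisj hdue hσ (hp a) (hp b) (hw b) hlo.1 hhi
    hσab hlo.2)

end Ordering

section Partition

variable {q : ℕ} {e : Fin (q + 1) → ℕ}

theorem pairwise_disjoint_Ioc_castSucc_succ (he : Monotone e) :
    Pairwise fun r r' : Fin q =>
      Disjoint (Ioc (e r.castSucc) (e r.succ)) (Ioc (e r'.castSucc) (e r'.succ)) := by
  refine (pairwise_disjoint_on _).mpr fun r r' hr => disjoint_left.mpr fun C hC hC' => ?_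
  have := he (Fin.succ_le_castSucc_iff.mpr hr)
  rw [mem_Ioc] at hC hC'
  omega

theorem succ_le_castSucc_or_succ_le_succ (he : Monotone e) (r r' : Fin q) :
    e r'.succ ≤ e r.castSucc ∨ e r.succ ≤ e r'.succ :=
  (lt_or_ge r' r).imp (fun hr => he (Fin.succ_le_castSucc_iff.mpr hr))
    fun hr => he (Fin.succ_le_succ_iff.mpr hr)

end Partition

theorem exists_optimal_schedule_ordered_up_to_first_job_general
    [Fintype J] [Fintype M] [DecidableEq M] [Nonempty M] [Finite Q] [LinearOrder α]
    {p w d : J → ℕ} (hp : ∀ j, 0 < p j) (hw : ∀ j, 0 < w j) {lo hi : Q → ℕ} {σ : Q → J → α}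
    (hdisj : Pairwise fun r r' => Disjoint (Ioc (lo r) (hi r)) (Ioc (lo r') (hi r')))
    (hdue : ∀ r j, d j ≤ lo r ∨ hi r ≤ d j)
    (hσ : ∀ r, FollowsWSPTLPT p w d (lo r) (hi r) (σ r)) :
    ∃ (μ : J → M) (S : J → ℕ), IsSchedule p μ S ∧
      (∀ k u, u < ∑ j with μ j = k, p j → IsBusy p μ S k u) ∧
      (∀ j, S j + p j ≤ (∑ i, p i - univ.sup p) / Fintype.card M + univ.sup p) ∧
      (∀ (μ' : J → M) (S' : J → ℕ), IsSchedule p μ' S' →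
        ∑ j, weightedTardiness p w d j (S j) ≤ ∑ j, weightedTardiness p w d j (S' j)) ∧
      ∀ r i j, μ i = μ j → S i + p i ≤ hi r → lo r < S j + p j → σ r i < σ r j →
        S i < S j ∨ S j ≤ lo r ∧ d j ≤ lo r := by
  cases nonempty_fintype Q
  obtain ⟨μ, S, h⟩ :=
    exists_isLexOptimal (M := M) p (weightedTardiness p w d) (orderPenalty p lo hi σ)
  have hactive := h.isActive hp (weightedTardiness_monotone p w d)
  exact ⟨μ, S, h.isSchedule, fun _ _ => hactive.isBusy_of_lt_sum, hactive.finish_le,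
    fun _ _ => h.sum_le, fun r _ _ => h.start_lt_or_straddles hp hw hdisj (hdue r) (hσ r)⟩

/-- For any due-date-based partition `I_r = (e_{r-1}, e_r]` of the time horizon with
permutations `σ_r` consistent with the WSPT/LPT ordering rules, there exists an
optimal idle-time-free schedule with all completion times at most `T` that follows
`σ_r` within each interval on each machine, except possibly for the job completing
first in the interval on that machine; such an exception can occur only if that
first-completing job is late in the interval. -/
theorem exists_optimal_schedule_ordered_up_to_first_job
    (n m : ℕ) (hm : 1 ≤ m) (p w d : Fin n → ℕ)
    (hp : ∀ j, 0 < p j) (hw : ∀ j, 0 < w j)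
    (T : ℕ) (hT : T = ((∑ j, p j) - univ.sup p + m - 1) / m + univ.sup p)
    (q : ℕ) (e : Fin (q + 1) → ℕ) (σ : Fin q → Equiv.Perm (Fin n))
    (he0 : e 0 = 0) (heT : e (Fin.last q) = T) (hmono : StrictMono e)
    -- the partition is based on due dates
    (hdue : ∀ j, ∃ r : Fin q, d j = e r.succ)
    -- σ is consistent with the WSPT/LPT ordering rules:
    -- long jobs precede short jobs
    (hlong : ∀ (r : Fin q) (i j : Fin n),
      e r.succ - e r.castSucc ≤ p i → p j < e r.succ - e r.castSucc →
      σ r i < σ r j)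
    -- a short late job precedes a short on-time job
    (hlate_ontime : ∀ (r : Fin q) (i j : Fin n),
      p i < e r.succ - e r.castSucc → p j < e r.succ - e r.castSucc →
      d i ≤ e r.castSucc → e r.succ ≤ d j → σ r i < σ r j)
    -- short on-time jobs follow the LPT rule
    (hontime_lpt : ∀ (r : Fin q) (i j : Fin n),
      p i < e r.succ - e r.castSucc → p j < e r.succ - e r.castSucc →
      e r.succ ≤ d i → e r.succ ≤ d j → p j < p i → σ r i < σ r j)
    -- short late jobs follow the WSPT rule (pᵢ/wᵢ < pⱼ/wⱼ, cross-multiplied)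
    (hlate_wspt : ∀ (r : Fin q) (i j : Fin n),
      p i < e r.succ - e r.castSucc → p j < e r.succ - e r.castSucc →
      d i ≤ e r.castSucc → d j ≤ e r.castSucc →
      p i * w j < p j * w i → σ r i < σ r j)
    -- ties among short late jobs are broken by LPT
    (hlate_tie : ∀ (r : Fin q) (i j : Fin n),
      p i < e r.succ - e r.castSucc → p j < e r.succ - e r.castSucc →
      d i ≤ e r.castSucc → d j ≤ e r.castSucc →
      p i * w j = p j * w i → p j < p i → σ r i < σ r j) :
    ∃ (μ : Fin n → Fin m) (S : Fin n → ℕ),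
      -- (μ, S) is a schedule
      (∀ i j, i ≠ j → μ i = μ j → S i + p i ≤ S j ∨ S j + p j ≤ S i) ∧
      -- no idle time
      (∀ k : Fin m, ∀ u, u < ∑ j ∈ univ.filter (fun j => μ j = k), p j →
        ∃ j, μ j = k ∧ S j ≤ u ∧ u < S j + p j) ∧
      -- all completion times at most T
      (∀ j, S j + p j ≤ T) ∧
      -- optimality for total weighted tardiness
      (∀ (μ' : Fin n → Fin m) (S' : Fin n → ℕ),
        (∀ i j, i ≠ j → μ' i = μ' j → S' i + p i ≤ S' j ∨ S' j + p j ≤ S' i) →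
        ∑ j, w j * (S j + p j - d j) ≤ ∑ j, w j * (S' j + p j - d j)) ∧
      -- σ_r is respected within each interval on each machine, except possibly when
      -- one of the two jobs completes first in the interval on that machine, and
      -- then only if that first-completing job is late in the interval
      (∀ (r : Fin q) (k : Fin m) (i j : Fin n), i ≠ j → μ i = k → μ j = k →
        e r.castSucc < S i + p i → S i + p i ≤ e r.succ →
        e r.castSucc < S j + p j → S j + p j ≤ e r.succ →
        σ r i < σ r j →
        (S i < S j ∨
          ∃ f : Fin n, (f = i ∨ f = j) ∧ μ f = k ∧
            e r.castSucc < S f + p f ∧ S f + p f ≤ e r.succ ∧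
            (∀ j' : Fin n, μ j' = k → e r.castSucc < S j' + p j' →
              S j' + p j' ≤ e r.succ → S f + p f ≤ S j' + p j') ∧
            d f ≤ e r.castSucc)) := by
  have : Nonempty (Fin m) := ⟨⟨0, hm⟩⟩
  have hdue' : ∀ (r : Fin q) j, d j ≤ e r.castSucc ∨ e r.succ ≤ d j := fun r j => by
    obtain ⟨r', hr'⟩ := hdue j
    exact hr' ▸ succ_le_castSucc_or_succ_le_succ hmono.monotone r r'
  obtain ⟨μ, S, hS, hbusy, hfinish, hopt, horder⟩ :=
    exists_optimal_schedule_ordered_up_to_first_job_general (M := Fin m) hp hw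
      (pairwise_disjoint_Ioc_castSucc_succ hmono.monotone) hdue'
      fun r => ⟨hlong r, hlate_ontime r, hontime_lpt r, hlate_wspt r⟩
  refine ⟨μ, S, hS, hbusy, fun j => (hfinish j).trans ?_, hopt, ?_⟩
  · rw [hT, Fintype.card_fin]
    exact Nat.add_le_add_right (Nat.div_le_div_right (by omega)) _
  · intro r k i j _ hi hj _ hi₂ hj₁ hj₂ hij
    exact (horder r i j (hi.trans hj.symm) hi₂ hj₁ hij).imp_right fun ⟨hSj, hdj⟩ =>
      ⟨j, .inr rfl, hj, hj₁, hj₂,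
        fun x hx hx₁ _ => hS.finish_le_of_start_le (hx.trans hj.symm) hSj hx₁, hdj⟩
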